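/- Let G, H and G₁, ..., G_n be abelian groups with tiles T ⊂ G and U_i ⊂ G_i, and let ρ : G → H be a surjective group homomorphism that is injective on T. If G₁ × ⋯ × G_n × H is (U₁, ..., U_n, ρ(T))-tilable, then G₁ × ⋯ × G_n × G is (U₁, ..., U_n, T)-tilable. -/

import Mathlib

/-! For homomorphisms `r i : A i →+ B i` and a tile `T` of `A j` on which `r j` is injective, the
preimage under `Pi.map r` of a copy of `r j '' T` is the disjoint union of the copies of `T` based
at the points lying over its base point. Hence a tiling downstairs pulls back copy by copy to a
tiling upstairs. -/

universe u

def IsCopyD {ι : Type*} [DecidableEq ι] {G : ι → Type*}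
    [∀ i, AddCommGroup (G i)] (T : ∀ i, Set (G i))
    (S : Set (∀ i, G i)) : Prop :=
  ∃ (j : ι) (y : ∀ i, G i),
    S = {z | ∃ t ∈ T j, z = Function.update y j (y j + t)}

def TilableD {ι : Type*} [DecidableEq ι] {G : ι → Type*}
    [∀ i, AddCommGroup (G i)] (T : ∀ i, Set (G i))
    (X : Set (∀ i, G i)) : Prop :=
  ∃ P : Set (Set (∀ i, G i)),
    (∀ S ∈ P, IsCopyD T S) ∧ P.PairwiseDisjoint id ∧ ⋃₀ P = X

instance sumElimAddCommGroup {α β : Type*} (F : α → Type u) (G : β → Type u)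
    [∀ a, AddCommGroup (F a)] [∀ b, AddCommGroup (G b)] :
    ∀ i : α ⊕ β, AddCommGroup (Sum.elim F G i) := fun i =>
  match i with
  | .inl a => inferInstanceAs (AddCommGroup (F a))
  | .inr b => inferInstanceAs (AddCommGroup (G b))

/-- The copy of a tile `S` of the `j`-th factor based at the point `y`: the translate of `S` by
`y j`, placed in the `j`-th coordinate line through `y`. The sets satisfying `IsCopyD T` are exactly
the `tileCopy j (T j) y`, and the set-builder form is chosen so that this holds definitionally. -/
def tileCopy {ι : Type*} [DecidableEq ι] {G : ι → Type*} [∀ i, AddCommGroup (G i)] (j : ι)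
    (S : Set (G j)) (y : ∀ i, G i) : Set (∀ i, G i) :=
  {z | ∃ t ∈ S, z = Function.update y j (y j + t)}

section Copies

variable {ι : Type*} [DecidableEq ι] {A B : ι → Type*}
  [∀ i, AddCommGroup (A i)] [∀ i, AddCommGroup (B i)]

theorem mem_tileCopy_iff {j : ι} {S : Set (A j)} {y z : ∀ i, A i} :
    z ∈ tileCopy j S y ↔ z j - y j ∈ S ∧ ∀ i ≠ j, z i = y i := by
  simp only [tileCopy, Set.mem_ofPred_eq, Function.eq_update_iff]
  constructor
  · rintro ⟨t, ht, hj, hne⟩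
    exact ⟨by rwa [hj, add_sub_cancel_left], hne⟩
  · rintro ⟨hj, hne⟩
    exact ⟨z j - y j, hj, (add_sub_cancel _ _).symm, hne⟩

theorem preimage_tileCopy_image (r : ∀ i, A i →+ B i) (j : ι) (T : Set (A j)) (y : ∀ i, B i) :
    Pi.map (fun i => r i) ⁻¹' tileCopy j (r j '' T) y =
      ⋃ w ∈ Pi.map (fun i => r i) ⁻¹' {y}, tileCopy j T w := by
  ext z
  simp only [Set.mem_preimage, Set.mem_iUnion, Set.mem_singleton_iff, mem_tileCopy_iff,
    Pi.map_apply, exists_prop]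
  constructor
  · rintro ⟨⟨t, ht, hrt⟩, hne⟩
    refine ⟨Function.update z j (z j - t), ?_, by simpa using ht, fun i hi => by simp [hi]⟩
    funext i
    obtain rfl | hi := eq_or_ne i j
    · simp [hrt]
    · simp [hi, hne i hi]
  · rintro ⟨w, rfl, hj, hne⟩
    exact ⟨⟨z j - w j, hj, map_sub (r j) _ _⟩, fun i hi => congrArg (r i) (hne i hi)⟩

theorem pairwiseDisjoint_tileCopy (r : ∀ i, A i →+ B i) {j : ι} {T : Set (A j)}
    (hinj : Set.InjOn (r j) T) (y : ∀ i, B i) :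
    (Pi.map (fun i => r i) ⁻¹' {y}).PairwiseDisjoint (tileCopy j T) := by
  refine Set.pairwiseDisjoint_iff.2 ?_
  rintro w hw w' hw' ⟨z, hz, hz'⟩
  rw [mem_tileCopy_iff] at hz hz'
  funext i
  obtain rfl | hi := eq_or_ne i j
  · have hr : r i (w i) = r i (w' i) := congrFun (hw.trans hw'.symm) i
    exact sub_right_injective (hinj hz.1 hz'.1 (by rw [map_sub, map_sub, hr]))
  · exact (hz.2 i hi).symm.trans (hz'.2 i hi)

theorem tilableD_tileCopy (T : ∀ i, Set (A i)) (j : ι) (y : ∀ i, A i) :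
    TilableD T (tileCopy j (T j) y) :=
  ⟨{tileCopy j (T j) y}, fun _ hS => ⟨j, y, hS⟩, Set.pairwiseDisjoint_singleton _ _,
    Set.sUnion_singleton _⟩

theorem TilableD.biUnion {κ : Type*} {T : ∀ i, Set (A i)} {s : Set κ} {X : κ → Set (∀ i, A i)}
    (hs : s.PairwiseDisjoint X) (hX : ∀ k ∈ s, TilableD T (X k)) :
    TilableD T (⋃ k ∈ s, X k) := by
  choose! P hcopy hdisj hunion using hX
  refine ⟨⋃ k ∈ s, P k, ?_, Set.PairwiseDisjoint.biUnion ?_ hdisj, ?_⟩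
  · intro S hS
    obtain ⟨k, hk, hSk⟩ := Set.mem_iUnion₂.1 hS
    exact hcopy k hk S hSk
  · intro k hk l hl hkl
    simpa only [Function.onFun, id, ← Set.sUnion_eq_biUnion, Set.iSup_eq_iUnion, hunion k hk,
      hunion l hl] using hs hk hl hkl
  · simp only [Set.sUnion_iUnion]
    exact Set.iUnion₂_congr hunion

theorem tilableD_preimage_tileCopy_image {T : ∀ i, Set (A i)} (r : ∀ i, A i →+ B i) {j : ι}
    (hinj : Set.InjOn (r j) (T j)) (y : ∀ i, B i) :
    TilableD T (Pi.map (fun i => r i) ⁻¹' tileCopy j (r j '' T j) y) := by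
  rw [preimage_tileCopy_image]
  exact .biUnion (pairwiseDisjoint_tileCopy r hinj y) fun w _ => tilableD_tileCopy T j w

theorem liftTiling_general {T : ∀ i, Set (A i)} {U : ∀ i, Set (B i)} (r : ∀ i, A i →+ B i)
    (hr : ∀ i, Set.BijOn (r i) (T i) (U i)) {X : Set (∀ i, B i)} (hX : TilableD U X) :
    TilableD T (Pi.map (fun i => r i) ⁻¹' X) := by
  obtain ⟨P, hcopy, hdisj, rfl⟩ := hX
  rw [Set.preimage_sUnion]
  refine .biUnion (fun S hS S' hS' hne => (hdisj hS hS' hne).preimage _) fun S hS => ?_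
  obtain ⟨j, y, rfl⟩ := hcopy S hS
  rw [← (hr j).image_eq]
  exact tilableD_preimage_tileCopy_image r (hr j).injOn y

end Copies

/-- lifting a tiling along a surjective homomorphism
`ρ : G → H` injective on `T`: if `G₁ × ⋯ × G_n × H` is
`(U₁,…,U_n,ρ(T))`-tilable then `G₁ × ⋯ × G_n × G` is `(U₁,…,U_n,T)`-tilable. -/
theorem liftTiling {G H : Type u} [AddCommGroup G] [AddCommGroup H]
    {n : ℕ} (Gn : Fin n → Type u) [∀ i, AddCommGroup (Gn i)]
    (T : Set G) (U : ∀ i, Set (Gn i))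
    (ρ : G →+ H) (hsurj : Function.Surjective ρ) (hinj : Set.InjOn ρ T)
    (h : TilableD (G := Sum.elim Gn fun _ : Unit => H)
          (fun i => match i with
            | .inl a => U a
            | .inr _ => ρ '' T)
          Set.univ) :
    TilableD (G := Sum.elim Gn fun _ : Unit => G)
      (fun i => match i with
        | .inl a => U a
        | .inr _ => T)
      Set.univ :=
  liftTiling_general (fun | .inl a => AddMonoidHom.id (Gn a) | .inr _ => ρ)
    (Sum.rec (fun a => Set.bijOn_id (U a)) fun _ => hinj.bijOn_image) h
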